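/- arXiv:2205.04965 — 3 statements merged into one kernel-verified Lean document; each statement's English description precedes it below -/
import Mathlib

section
/- Let p, q be pure unit quaternions and l, r unit quaternions. Then { (conj l) * x * r : x ∈ K_p^q } = K_p^q if and only if either ((conj l) * p * l = p and (conj r) * q * r = q) or ((conj l) * p * l = −p and (conj r) * q * r = −q). -/
open Quaternion

/-- The great circle `K_p^q`: the set of unit quaternions `x` with
`(conj x) * p * x = q`. -/
def K (p q : Quaternion ℝ) : Set (Quaternion ℝ) :=
  {x : Quaternion ℝ | ‖x‖ = 1 ∧ star x * p * x = q}

lemma aux_unit {x : Quaternion ℝ} (hx : ‖x‖ = 1) : star x * x = 1 ∧ x * star x = 1 := by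
  constructor
  · rw [Quaternion.star_mul_self, Quaternion.normSq_eq_norm_mul_self, hx]; simp
  · rw [Quaternion.self_mul_star, Quaternion.normSq_eq_norm_mul_self, hx]; simp

lemma aux_conj {x : Quaternion ℝ} (hx : ‖x‖ = 1) (p q : Quaternion ℝ) :
    star x * p * x = q ↔ p * x = x * q := by
  obtain ⟨h1, h2⟩ := aux_unit hx
  constructor
  · rintro rfl
    rw [← mul_assoc, ← mul_assoc, h2, one_mul]
  · intro h
    rw [mul_assoc, h, ← mul_assoc, h1, one_mul]

lemma aux_sq {p : Quaternion ℝ} (hp : p.re = 0) (hpn : ‖p‖ = 1) : p * p = -1 := by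
  have h := (aux_unit hpn).1
  have hs : star p = -p := by
    ext <;> simp [hp]
  rw [hs] at h
  rw [← h]; simp

lemma aux_noncentral {p : Quaternion ℝ} (hp : p.re = 0) (h : ∀ a, p * a = a * p) : p = 0 := by
  have h1 := h ⟨0, 1, 0, 0⟩
  have h2 := h ⟨0, 0, 1, 0⟩
  have a1 := Quaternion.imJ_mul p ⟨0, 1, 0, 0⟩
  have a2 := Quaternion.imK_mul p ⟨0, 1, 0, 0⟩
  have a3 := Quaternion.imK_mul p ⟨0, 0, 1, 0⟩
  erw [h1, Quaternion.imJ_mul] at a1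
  erw [h1, Quaternion.imK_mul] at a2
  erw [h2, Quaternion.imK_mul] at a3
  norm_num at a1 a2 a3
  ext
  · exact hp
  · change p.imI = 0; linarith
  · change p.imJ = 0; linarith
  · change p.imK = 0; linarith

lemma aux_nonempty {p q : Quaternion ℝ}
    (hp : p.re = 0) (hpn : ‖p‖ = 1) (hq : q.re = 0) (hqn : ‖q‖ = 1) :
    ∃ x : Quaternion ℝ, ‖x‖ = 1 ∧ p * x = x * q := by
  have pp := aux_sq hp hpn
  have qq := aux_sq hq hqn
  have key : ∃ a : Quaternion ℝ, a - p * a * q ≠ 0 := by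
    by_contra! hc
    have h1 := hc 1
    have hqp : q = -p := by
      have : p * (1 - p * 1 * q) = 0 := by rw [h1, mul_zero]
      rw [mul_one, mul_sub, mul_one, ← mul_assoc, pp] at this
      rw [eq_neg_iff_add_eq_zero, ← this]; noncomm_ring
    have : p = 0 := by
      apply aux_noncentral hp
      intro a
      have h2 : p * (a - p * a * q) = 0 := by rw [hc a, mul_zero]
      rw [mul_sub, ← mul_assoc, ← mul_assoc, pp, hqp] at h2
      have h3 : p * a - a * p = 0 := by rw [← h2]; noncomm_ring
      exact sub_eq_zero.1 h3
    rw [this] at hpn; simp at hpn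
  obtain ⟨a, ha⟩ := key
  have hc : p * (a - p * a * q) = (a - p * a * q) * q := by
    have e1 : p * (a - p * a * q) = p * a - (p * p) * a * q := by noncomm_ring
    have e2 : (a - p * a * q) * q = a * q - p * a * (q * q) := by noncomm_ring
    rw [e1, e2, pp, qq]; noncomm_ring
  refine ⟨(‖a - p * a * q‖)⁻¹ • (a - p * a * q), ?_, ?_⟩
  · rw [norm_smul, norm_inv, norm_norm]
    exact inv_mul_cancel₀ (norm_ne_zero_iff.2 ha)
  · rw [mul_smul_comm, smul_mul_assoc, hc]

lemma aux_mem {p q x : Quaternion ℝ} : x ∈ K p q ↔ ‖x‖ = 1 ∧ p * x = x * q := by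
  constructor
  · rintro ⟨h, h'⟩; exact ⟨h, (aux_conj h p q).1 h'⟩
  · rintro ⟨h, h'⟩; exact ⟨h, (aux_conj h p q).2 h'⟩

/-- `e` is a central sign. -/
lemma aux_star {p l : Quaternion ℝ} (hl : ‖l‖ = 1) {e : ℝ} (he : e * e = 1) :
    p * l = e • (l * p) ↔ p * star l = e • (star l * p) := by
  obtain ⟨h1, h2⟩ := aux_unit hl
  constructor
  · intro h
    have h3 : star l * (p * l) * star l = e • (star l * (l * p) * star l) := by
      rw [h]; simp
    rw [mul_assoc, mul_assoc p, h2, mul_one, ← mul_assoc (star l) l, h1, one_mul] at h3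
    rw [h3, smul_smul, he, one_smul]
  · intro h
    have h3 : l * (p * star l) * l = e • (l * (star l * p) * l) := by
      rw [h]; simp
    rw [mul_assoc, mul_assoc p, h1, mul_one, ← mul_assoc l (star l), h2, one_mul] at h3
    rw [h3, smul_smul, he, one_smul]

lemma aux_maps {p q l r x : Quaternion ℝ} {e : ℝ} (he : e * e = 1)
    (hl : p * l = e • (l * p)) (hr : q * r = e • (r * q)) (hx : p * x = x * q) :
    p * (l * x * r) = (l * x * r) * q := by
  calc p * (l * x * r) = (p * l) * x * r := by noncomm_ring
    _ = e • (l * (p * x) * r) := by rw [hl]; simp [mul_assoc]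
    _ = e • (l * x * (q * r)) := by rw [hx]; simp [mul_assoc]
    _ = (e * e) • (l * x * r * q) := by rw [hr]; simp [mul_assoc, smul_smul]
    _ = _ := by rw [he, one_smul]

lemma aux_back {p q l r : Quaternion ℝ} (hl : ‖l‖ = 1) (hr : ‖r‖ = 1) {e : ℝ} (he : e * e = 1)
    (hpl : p * l = e • (l * p)) (hqr : q * r = e • (r * q)) :
    (fun x : Quaternion ℝ => star l * x * r) '' K p q = K p q := by
  have hpl' := (aux_star hl he).1 hpl
  have hqr' := (aux_star hr he).1 hqr
  obtain ⟨l1, l2⟩ := aux_unit hl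
  obtain ⟨r1, r2⟩ := aux_unit hr
  ext y
  constructor
  · rintro ⟨x, hx, rfl⟩
    obtain ⟨hx, hx'⟩ := aux_mem.1 hx
    refine aux_mem.2 ⟨by simp [hx, hl, hr], aux_maps he hpl' hqr hx'⟩
  · intro hy
    obtain ⟨hy, hy'⟩ := aux_mem.1 hy
    refine ⟨l * y * star r, aux_mem.2 ⟨by simp [hy, hl, hr], aux_maps he hpl hqr' hy'⟩, ?_⟩
    calc star l * (l * y * star r) * r = (star l * l) * y * (star r * r) := by noncomm_ring
      _ = y := by rw [l1, r1]; simp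

theorem statement6 (p q l r : Quaternion ℝ)
    (hp : p.re = 0) (hpn : ‖p‖ = 1) (hq : q.re = 0) (hqn : ‖q‖ = 1)
    (hl : ‖l‖ = 1) (hr : ‖r‖ = 1) :
    (fun x : Quaternion ℝ => star l * x * r) '' K p q = K p q ↔
      ((star l * p * l = p ∧ star r * q * r = q) ∨
       (star l * p * l = -p ∧ star r * q * r = -q)) := by
  rw [aux_conj hl, aux_conj hr, aux_conj hl, aux_conj hr]
  constructor
  · intro h
    obtain ⟨l1, l2⟩ := aux_unit hl
    obtain ⟨r1, r2⟩ := aux_unit hr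
    have pp := aux_sq hp hpn
    obtain ⟨x, hx, hpx⟩ := aux_nonempty hp hpn hq hqn
    have hx0 : x ≠ 0 := by rintro rfl; simp at hx
    have key : ∀ y : Quaternion ℝ, ‖y‖ = 1 → p * y = y * q →
        (l * p * star l) * y = y * (r * q * star r) := by
      intro y hy hy'
      have hm : star l * y * r ∈ K p q := by
        rw [← h]; exact ⟨y, aux_mem.2 ⟨hy, hy'⟩, rfl⟩
      have hm' := (aux_mem.1 hm).2
      calc (l * p * star l) * y = l * p * star l * y * (r * star r) := by rw [r2, mul_one]
        _ = l * (p * (star l * y * r)) * star r := by noncomm_ring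
        _ = (l * star l) * y * (r * q * star r) := by rw [hm']; noncomm_ring
        _ = _ := by rw [l2, one_mul]
    have k1 := key x hx hpx
    have k2 := key (p * x) (by simp [hpn, hx]) (by rw [mul_assoc, ← hpx])
    have hA : (l * p * star l) * p = p * (l * p * star l) := by
      apply mul_right_cancel₀ hx0
      rw [mul_assoc, k2, mul_assoc p x, ← k1, mul_assoc p]
    have hAA : (l * p * star l) * (l * p * star l) = -1 := by
      calc _ = l * p * (star l * l) * p * star l := by noncomm_ring
        _ = l * (p * p) * star l := by rw [l1]; noncomm_ring
        _ = -(l * star l) := by rw [pp]; noncomm_ring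
        _ = -1 := by rw [l2]
    have hz : (l * p * star l - p) * (l * p * star l + p) = 0 := by
      rw [sub_mul, mul_add, mul_add, hAA, hA, pp]; abel
    have fin : ∀ z w : Quaternion ℝ, ∀ s : Quaternion ℝ, ‖s‖ = 1 → s * z * star s = w →
        s * z = w * s := by
      rintro z w s hs rfl
      rw [mul_assoc, (aux_unit hs).1, mul_one]
    rcases mul_eq_zero.1 hz with h0 | h0
    · left
      have hA' := sub_eq_zero.1 h0
      rw [hA', hpx] at k1
      exact ⟨(fin _ _ l hl hA').symm, (fin _ _ r hr (mul_left_cancel₀ hx0 k1).symm).symm⟩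
    · right
      have hA' := eq_neg_of_add_eq_zero_left h0
      rw [hA', neg_mul, hpx, ← mul_neg] at k1
      have e1 := fin _ _ l hl hA'
      have e2 := fin _ _ r hr (mul_left_cancel₀ hx0 k1).symm
      rw [mul_neg, mul_neg, e1, e2]
      simp
  · rintro (⟨h1, h2⟩ | ⟨h1, h2⟩)
    · exact aux_back hl hr (e := 1) (by norm_num) (by simpa using h1) (by simpa using h2)
    · exact aux_back hl hr (e := -1) (by norm_num) (by simpa using h1) (by simpa using h2)
end

section
/- Let q₀ be a pure unit quaternion and φ ∈ ℝ. The right rotation x ↦ x * exp(q₀φ) maps every circle of the left Hopf bundle ℋ^{q₀} onto itself and rotates every point of S³ by the same angle |φ|: for every pure unit quaternion p and every x ∈ K_p^{q₀}, one has x * exp(q₀φ) ∈ K_p^{q₀} and ⟪x, x * exp(q₀φ)⟫ = cos φ. -/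
open Quaternion RealInnerProductSpace

/-- `exp(pθ) = cos θ + (sin θ) p`, a unit quaternion when `p` is a pure unit quaternion. -/
noncomputable def eexp (p : Quaternion ℝ) (θ : ℝ) : Quaternion ℝ :=
  ((Real.cos θ : ℝ) : Quaternion ℝ) + (Real.sin θ) • p

theorem star_mul_self_of_norm_one (x : Quaternion ℝ) (h : ‖x‖ = 1) : star x * x = 1 := by
  rw [Quaternion.star_mul_self, Quaternion.normSq_eq_norm_mul_self, h]
  simp

theorem norm_eexp (q : Quaternion ℝ) (hq : q.re = 0) (hqn : ‖q‖ = 1) (φ : ℝ) :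
    ‖eexp q φ‖ = 1 := by
  have h1 : Quaternion.normSq q = 1 := by
    rw [Quaternion.normSq_eq_norm_mul_self, hqn]; norm_num
  have h2 : Quaternion.normSq (eexp q φ) = 1 := by
    rw [Quaternion.normSq_def'] at h1 ⊢
    simp [eexp, hq] at h1 ⊢
    linear_combination (Real.sin φ) ^ 2 * h1 + Real.sin_sq_add_cos_sq φ
  rw [Quaternion.normSq_eq_norm_mul_self] at h2
  nlinarith [norm_nonneg (eexp q φ)]

theorem eexp_comm (q : Quaternion ℝ) (φ : ℝ) : q * eexp q φ = eexp q φ * q := by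
  unfold eexp
  rw [mul_add, add_mul, Quaternion.coe_commutes, mul_smul_comm, smul_mul_assoc]

theorem statement10 (q₀ : Quaternion ℝ)
    (hq : q₀.re = 0) (hqn : ‖q₀‖ = 1) (φ : ℝ) :
    ∀ p : Quaternion ℝ, p.re = 0 → ‖p‖ = 1 →
      ∀ x ∈ K p q₀,
        x * eexp q₀ φ ∈ K p q₀ ∧ ⟪x, x * eexp q₀ φ⟫ = Real.cos φ := by
  rintro p - - x ⟨hx, hxq⟩
  have he := norm_eexp q₀ hq hqn φ
  refine ⟨⟨by rw [norm_mul, hx, he, one_mul], ?_⟩, ?_⟩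
  · calc star (x * eexp q₀ φ) * p * (x * eexp q₀ φ)
        = star (eexp q₀ φ) * ((star x * p * x) * eexp q₀ φ) := by
          rw [star_mul]; simp only [mul_assoc]
      _ = q₀ := by
          rw [hxq, eexp_comm, ← mul_assoc, star_mul_self_of_norm_one _ he, one_mul]
  · have h1 : Quaternion.normSq x = 1 := by
      rw [Quaternion.normSq_eq_norm_mul_self, hx]; norm_num
    rw [Quaternion.normSq_def'] at h1
    rw [Quaternion.inner_def]
    simp [eexp, hq]
    linear_combination Real.cos φ * h1
end

section
/- Orthogonal transformations act on Clifford tori by transforming the parameters: let p, q be pure unit quaternions and l, r unit quaternions. Then { (conj l) * x * r : x ∈ 𝕋_p^q } = 𝕋_{(conj l) * p * l}^{(conj r) * q * r}, and { conj x : x ∈ 𝕋_p^q } = 𝕋_q^p. -/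
open Quaternion RealInnerProductSpace

/-- The geodesic (angular) distance from a point `x` of `S³` to a subset `A` of `S³`:
`d(x, A) = inf_{y ∈ A} arccos ⟪x, y⟫`. -/
noncomputable def sdist (x : Quaternion ℝ) (A : Set (Quaternion ℝ)) : ℝ :=
  sInf ((fun y => Real.arccos ⟪x, y⟫) '' A)

/-- The Clifford torus `𝕋_p^q`: the points of `S³` equidistant from the two
absolutely orthogonal great circles `K_p^q` and `K_p^{-q}`. -/
noncomputable def CT (p q : Quaternion ℝ) : Set (Quaternion ℝ) :=
  {x : Quaternion ℝ | ‖x‖ = 1 ∧ sdist x (K p q) = sdist x (K p (-q))}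

theorem unit_star_mul (a : Quaternion ℝ) (h : ‖a‖ = 1) : star a * a = 1 := by
  rw [Quaternion.star_mul_self, Quaternion.normSq_eq_norm_mul_self, h]; simp

theorem unit_mul_star (a : Quaternion ℝ) (h : ‖a‖ = 1) : a * star a = 1 := by
  rw [Quaternion.self_mul_star, Quaternion.normSq_eq_norm_mul_self, h]; simp

theorem re_mul_comm' (a b : Quaternion ℝ) : (a * b).re = (b * a).re := by
  simp only [Quaternion.re_mul]; ring

theorem CT_image (f g : Quaternion ℝ → Quaternion ℝ) (p q p' q' : Quaternion ℝ)
    (hfg : ∀ x, f (g x) = x)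
    (hin : ∀ x y, (⟪f x, f y⟫ : ℝ) = ⟪x, y⟫)
    (h1 : ∀ x, f x ∈ K p' q' ↔ x ∈ K p q)
    (h2 : ∀ x, f x ∈ K p' (-q') ↔ x ∈ K p (-q)) :
    f '' CT p q = CT p' q' := by
  have hn : ∀ x, ‖f x‖ = ‖x‖ := fun x => by
    rw [@norm_eq_sqrt_real_inner _ _ _ (f x), @norm_eq_sqrt_real_inner _ _ _ x, hin]
  have key : ∀ (A B : Set (Quaternion ℝ)), (∀ x, f x ∈ B ↔ x ∈ A) →
      ∀ x, sdist (f x) B = sdist x A := by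
    intro A B h x
    unfold sdist
    congr 1
    ext t
    constructor
    · rintro ⟨y, hy, rfl⟩
      refine ⟨g y, (h _).1 (by rwa [hfg]), ?_⟩
      simp only
      rw [← hin, hfg]
    · rintro ⟨y, hy, rfl⟩
      refine ⟨f y, (h _).2 hy, ?_⟩
      simp only
      rw [hin]
  have hm : ∀ x, f x ∈ CT p' q' ↔ x ∈ CT p q := fun x => by
    simp only [CT, Set.mem_ofPred_eq, hn, key _ _ h1, key _ _ h2]
  ext y
  constructor
  · rintro ⟨x, hx, rfl⟩
    exact (hm x).2 hx
  · intro hy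
    exact ⟨g y, (hm _).1 (by rwa [hfg]), hfg y⟩

theorem K_conj (p q l r x : Quaternion ℝ) (hl : ‖l‖ = 1) (hr : ‖r‖ = 1) :
    star l * x * r ∈ K (star l * p * l) (star r * q * r) ↔ x ∈ K p q := by
  have e : star (star l * x * r) * (star l * p * l) * (star l * x * r)
      = star r * (star x * p * x) * r := by
    simp only [star_mul, star_star]
    calc _ = star r * (star x * ((l * star l) * p * (l * star l)) * x) * r := by noncomm_ring
      _ = _ := by rw [unit_mul_star l hl]; simp
  have c : ∀ a : Quaternion ℝ, r * (star r * a * r) * star r = a := fun a => by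
    calc _ = (r * star r) * a * (r * star r) := by noncomm_ring
      _ = _ := by rw [unit_mul_star r hr]; simp
  simp only [K, Set.mem_ofPred_eq, norm_mul, norm_star, hl, hr, e, one_mul, mul_one]
  refine and_congr_right fun _ => ⟨fun h => ?_, fun h => by rw [h]⟩
  rw [← c (star x * p * x), h, c]

theorem K_star_aux (p q x : Quaternion ℝ) (h : x ∈ K p q) : star x ∈ K q p := by
  obtain ⟨h1, rfl⟩ := h
  refine ⟨by rwa [norm_star], ?_⟩
  rw [star_star]
  calc _ = (x * star x) * p * (x * star x) := by noncomm_ring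
    _ = _ := by rw [unit_mul_star x h1]; simp

theorem K_star (p q x : Quaternion ℝ) : star x ∈ K q p ↔ x ∈ K p q :=
  ⟨fun h => by simpa using K_star_aux _ _ _ h, K_star_aux _ _ _⟩

theorem K_neg (p q : Quaternion ℝ) : K (-p) q = K p (-q) := by
  ext x
  simp only [K, Set.mem_ofPred_eq, mul_neg, neg_mul, neg_eq_iff_eq_neg]

theorem statement19 (p q l r : Quaternion ℝ)
    (hp : p.re = 0) (hpn : ‖p‖ = 1) (hq : q.re = 0) (hqn : ‖q‖ = 1)
    (hl : ‖l‖ = 1) (hr : ‖r‖ = 1) :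
    (fun x : Quaternion ℝ => star l * x * r) '' CT p q
        = CT (star l * p * l) (star r * q * r) ∧
    (fun x : Quaternion ℝ => star x) '' CT p q = CT q p := by
  refine ⟨CT_image _ (fun x => l * x * star r) _ _ _ _ ?_ ?_ ?_ ?_,
    CT_image _ (fun x => star x) _ _ _ _ ?_ ?_ ?_ ?_⟩
  · intro x
    calc _ = (star l * l) * x * (star r * r) := by noncomm_ring
      _ = _ := by rw [unit_star_mul l hl, unit_star_mul r hr]; simp
  · intro x y
    simp only [Quaternion.inner_def, star_mul, star_star]
    calc _ = (star l * (x * (r * star r) * star y * l)).re := by congr 1; noncomm_ring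
      _ = (x * star y * (l * star l)).re := by
        rw [unit_mul_star r hr, re_mul_comm']; congr 1; noncomm_ring
      _ = _ := by rw [unit_mul_star l hl, mul_one]
  · exact fun x => K_conj p q l r x hl hr
  · intro x
    have := K_conj p (-q) l r x hl hr
    simpa only [mul_neg, neg_mul] using this
  · exact fun x => star_star x
  · intro x y
    simp only [Quaternion.inner_def, Quaternion.re_mul, Quaternion.re_star, Quaternion.imI_star,
      Quaternion.imJ_star, Quaternion.imK_star]
    ring
  · exact fun x => K_star p q x
  · intro x
    rw [← K_neg, K_star]
end
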